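/- Let K ∈ ℝ^{4×4} be the matrix with block form [[0, I₂],[I₂, 0]]. For a, b ∈ ℝ let X(a,b) = a(E_{1,2} − E_{2,1} + E_{3,4} − E_{4,3}) + b(E_{1,4} − E_{2,3}) ∈ ℝ^{4×4}. Then M = {E(X(a,b), 0) : a, b ∈ ℝ} is a maximal abelian subalgebra of the Lie algebra e(K). -/

import Mathlib

/-!
Write `J = [[0, 1], [-1, 0]]`, so that `M` consists of the `E(X(a, b), 0)` with
`X(a, b) = [[aJ, bJ], [0, aJ]]`. The product rule `Emat_mul_Emat` reduces commutation in `e(K)`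
to the commutation of the linear parts together with a condition on the translation parts.

That `M` is an abelian subspace of `e(K)` is a direct computation. For maximality let
`E(Y, α)` in `e(K)` commute with `M`. Commuting with `E(X(1, 0), 0)` forces `X(1, 0) α = 0`, so
`α = 0` as `X(1, 0) = diag(J, J)` is invertible. Write `Y = [[A, B], [C, -Aᵀ]]` with `B`, `C`
skew. Commuting with `X(0, 1)` gives `C = 0` and `AJ = -JAᵀ`, and commuting with `X(1, 0)` gives
`AJ = JA`; together they leave only `A = aJ`, while `B = bJ` because `B` is a skew `2 × 2` block.
-/

open Matrix

/-- `o(K)`: real matrices `X` with `XK + KXᵀ = 0`. -/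
def oK {n : ℕ} (K : Matrix (Fin n) (Fin n) ℝ) : Set (Matrix (Fin n) (Fin n) ℝ) :=
  {X | X * K + K * Xᵀ = 0}

/-- The `(n+1) × (n+1)` matrix `E(X, a)` with block form `[[X, a], [0, 0]]`. -/
def Emat {n : ℕ} (X : Matrix (Fin n) (Fin n) ℝ) (a : Fin n → ℝ) :
    Matrix (Fin (n + 1)) (Fin (n + 1)) ℝ :=
  Matrix.of fun i j =>
    if hi : i.val < n then
      if hj : j.val < n then X ⟨i.val, hi⟩ ⟨j.val, hj⟩ else a ⟨i.val, hi⟩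
    else 0

/-- The Lie algebra `e(K)`, as a set of `(n+1) × (n+1)` matrices. -/
def eK {n : ℕ} (K : Matrix (Fin n) (Fin n) ℝ) :
    Set (Matrix (Fin (n + 1)) (Fin (n + 1)) ℝ) :=
  {m | ∃ X ∈ oK K, ∃ a : Fin n → ℝ, m = Emat X a}

/-- `M` is a maximal abelian subalgebra of the matrix Lie algebra (set) `L`:
it is a linear subspace contained in `L`, its elements pairwise commute, and
every element of `L` commuting with all of `M` belongs to `M`. -/
def IsMASA {κ : Type*} [Fintype κ] (L M : Set (Matrix κ κ ℝ)) : Prop :=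
  M ⊆ L ∧
  (∀ X ∈ M, ∀ Y ∈ M, X * Y = Y * X) ∧
  (0 : Matrix κ κ ℝ) ∈ M ∧
  (∀ X ∈ M, ∀ Y ∈ M, X + Y ∈ M) ∧
  (∀ (c : ℝ), ∀ X ∈ M, c • X ∈ M) ∧
  (∀ Y ∈ L, (∀ X ∈ M, Y * X = X * Y) → Y ∈ M)

/-- The product of two elements of `e(K)`: the linear parts multiply, and the left linear part acts
on the right translation part. -/
theorem Emat_mul_Emat {n : ℕ} (X Y : Matrix (Fin n) (Fin n) ℝ) (a b : Fin n → ℝ) :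
    Emat X a * Emat Y b = Emat (X * Y) (X *ᵥ b) := by
  ext i j
  rw [Matrix.mul_apply, Fin.sum_univ_castSucc]
  by_cases hi : i.val < n <;> by_cases hj : j.val < n <;>
    simp [Emat, hi, hj, Matrix.mul_apply, Matrix.mulVec, dotProduct]

theorem Emat_inj {n : ℕ} {X Y : Matrix (Fin n) (Fin n) ℝ} {a b : Fin n → ℝ}
    (h : Emat X a = Emat Y b) : X = Y ∧ a = b := by
  constructor
  · ext i j
    simpa [Emat] using congrFun (congrFun h i.castSucc) j.castSucc
  · ext i
    simpa [Emat] using congrFun (congrFun h i.castSucc) (Fin.last n)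

theorem Emat_zero {n : ℕ} : Emat (0 : Matrix (Fin n) (Fin n) ℝ) 0 = 0 := by
  ext i j
  simp [Emat]

theorem Emat_add {n : ℕ} (X Y : Matrix (Fin n) (Fin n) ℝ) (a b : Fin n → ℝ) :
    Emat X a + Emat Y b = Emat (X + Y) (a + b) := by
  ext i j
  by_cases hi : i.val < n <;> by_cases hj : j.val < n <;> simp [Emat, hi, hj]

theorem Emat_smul {n : ℕ} (c : ℝ) (X : Matrix (Fin n) (Fin n) ℝ) (a : Fin n → ℝ) :
    c • Emat X a = Emat (c • X) (c • a) := by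
  ext i j
  by_cases hi : i.val < n <;> by_cases hj : j.val < n <;> simp [Emat, hi, hj]

/-- `M = {E(X(a,b), 0)}` with `X(a,b) = a(E₁₂-E₂₁+E₃₄-E₄₃) + b(E₁₄-E₂₃)` is a
maximal abelian subalgebra of `e(K)`, `K = [[0, I₂],[I₂, 0]]`. -/
theorem stmt15 :
    IsMASA (eK (!![0, 0, 1, 0; 0, 0, 0, 1; 1, 0, 0, 0; 0, 1, 0, 0] :
        Matrix (Fin 4) (Fin 4) ℝ))
      {m | ∃ a b : ℝ,
        m = Emat (!![0, a, 0, b;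
                     -a, 0, -b, 0;
                     0, 0, 0, a;
                     0, 0, -a, 0] : Matrix (Fin 4) (Fin 4) ℝ) 0} := by
  refine ⟨?_, ?_, ?_, ?_, ?_, ?_⟩
  · rintro _ ⟨a, b, rfl⟩
    refine ⟨_, ?_, 0, rfl⟩
    change _ + _ = _
    ext i j
    fin_cases i <;> fin_cases j <;>
      simp [Fin.sum_univ_four, Matrix.vecMul, dotProduct]
  · rintro _ ⟨a, b, rfl⟩ _ ⟨c, d, rfl⟩
    rw [Emat_mul_Emat, Emat_mul_Emat, Matrix.mulVec_zero, Matrix.mulVec_zero]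
    congr 1
    ext i j
    fin_cases i <;> fin_cases j <;>
      simp [Matrix.mul_apply, Fin.sum_univ_four] <;> ring
  · refine ⟨0, 0, ?_⟩
    rw [← Emat_zero]
    congr 1
    ext i j
    fin_cases i <;> fin_cases j <;> simp
  · rintro _ ⟨a, b, rfl⟩ _ ⟨c, d, rfl⟩
    refine ⟨a + c, b + d, ?_⟩
    rw [Emat_add, add_zero]
    congr 1
    ext i j
    fin_cases i <;> fin_cases j <;> simp <;> ring
  · rintro c _ ⟨a, b, rfl⟩
    refine ⟨c * a, c * b, ?_⟩
    rw [Emat_smul, smul_zero]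
    congr 1
    ext i j
    fin_cases i <;> fin_cases j <;> simp
  · rintro _ ⟨Y, hY, α, rfl⟩ hcomm
    have h1 := hcomm _ ⟨1, 0, rfl⟩
    have h2 := hcomm _ ⟨0, 1, rfl⟩
    rw [Emat_mul_Emat, Emat_mul_Emat] at h1 h2
    obtain ⟨hlin1, hα⟩ := Emat_inj h1
    obtain ⟨hlin2, -⟩ := Emat_inj h2
    -- The translation parts give `X(1, 0) α = 0`, and `X(1, 0)` is a signed permutation matrix.
    have hα0 : α = 0 := by
      have e0 := congrFun hα 0
      have e1 := congrFun hα 1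
      have e2 := congrFun hα 2
      have e3 := congrFun hα 3
      simp [Matrix.mulVec, dotProduct, Fin.sum_univ_four] at e0 e1 e2 e3
      ext i
      fin_cases i <;> simp <;> linarith
    subst hα0
    refine ⟨Y 0 1, Y 0 3, ?_⟩
    congr 1
    -- Written out entrywise, `Y ∈ o(K)` and the two commutation relations are linear equations
    -- in the entries of `Y`, with solution space `{X(a, b)}`.
    change Y * _ + _ = 0 at hY
    rw [← Matrix.ext_iff] at hY hlin1 hlin2
    simp only [Fin.forall_fin_succ, Matrix.add_apply, Matrix.mul_apply,
      Fin.sum_univ_four] at hY hlin1 hlin2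
    simp at hY hlin1 hlin2
    clear hcomm h1 h2 hα
    ext i j
    fin_cases i <;> fin_cases j <;> simp <;> grind
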